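/- arXiv:2304.01338 — 2 statements merged into one kernel-verified Lean document; each statement's English description precedes it below -/
import Mathlib

section
/- Let U ⊆ ℝⁿ be an open neighborhood of the origin and F : U → ℝ an arc-analytic function. Suppose there is a finite composite σ̄ : ℝⁿ → ℝⁿ of elementary monomial coordinate changes such that F∘σ̄ is real analytic at the origin, and suppose F satisfies the monomial curve condition at 0. Then F is real analytic at the origin. -/
/-- An elementary monomial coordinate change on `ℝⁿ`: either a permutation of the
coordinates, or, for an index `r` with (1-based) `1 < r ≤ n` (i.e. `0 < (r : ℕ)` in the
0-based indexing), the map `(x₁, …, xₙ) ↦ (x₁xᵣ, …, x_{r−1}xᵣ, xᵣ, x_{r+1}, …, xₙ)`. -/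
def IsElemMonomialChange {n : ℕ} (σ : (Fin n → ℝ) → (Fin n → ℝ)) : Prop :=
  (∃ e : Equiv.Perm (Fin n), σ = fun x i => x (e i)) ∨
  (∃ r : Fin n, 0 < (r : ℕ) ∧ σ = fun x i => if i < r then x i * x r else x i)

/-- `F` is arc-analytic on `U`: for every real analytic curve `φ : ℝ → ℝⁿ` and every `t₀`
with `φ t₀ ∈ U`, the composite `F ∘ φ` is real analytic at `t₀`. -/
def ArcAnalyticOn {n : ℕ} (U : Set (Fin n → ℝ)) (F : (Fin n → ℝ) → ℝ) : Prop :=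
  ∀ φ : ℝ → (Fin n → ℝ), (∀ t : ℝ, AnalyticAt ℝ φ t) →
    ∀ t₀ : ℝ, φ t₀ ∈ U → AnalyticAt ℝ (fun t => F (φ t)) t₀

/-- `F` satisfies the monomial curve condition at `0`. -/
def MonomialCurveCondition {n : ℕ} (F : (Fin n → ℝ) → ℝ) : Prop :=
  ∀ m : Fin n → ℕ, (∀ i, 0 < m i) →
    ∃ p : FormalMultilinearSeries ℝ ℝ ℝ,
      HasFPowerSeriesAt (fun t : ℝ => F (fun i => t ^ m i)) p 0 ∧
      ∀ k ∉ AddSubmonoid.closure (Set.range m), p.coeff k = 0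


theorem aux_expand {n : ℕ} (G : (Fin n → ℝ) → ℝ) (hG : AnalyticAt ℝ G 0) :
    ∃ (g : (Fin n → ℕ) → ℝ) (r : ℝ), 0 < r ∧ r ≤ 1 ∧ ∀ x : Fin n → ℝ, (∀ i, |x i| ≤ r) →
      HasSum (fun β : Fin n → ℕ => g β * ∏ i, x i ^ β i) (G x) := by
  obtain ⟨p, ρ, hp⟩ := hG
  obtain ⟨R, hR0, hR⟩ := ENNReal.lt_iff_exists_nnreal_btwn.1 hp.r_pos
  have hR0' : (0 : ℝ) < R := by exact_mod_cast hR0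
  have hRrad : (R : ENNReal) < p.radius := lt_of_lt_of_le hR hp.r_le
  set c : (Σ k : ℕ, (Fin k → Fin n)) → ℝ :=
    fun w => p w.1 (fun i => Pi.single (w.2 i) 1) with hc
  set ct : (Σ k : ℕ, (Fin k → Fin n)) → (Fin n → ℕ) :=
    fun w i => (Finset.univ.filter (fun j => w.2 j = i)).card with hct
  have hcb : ∀ w, ‖c w‖ ≤ ‖p w.1‖ := by
    intro w
    have := (p w.1).le_opNorm (fun i => (Pi.single (w.2 i) 1 : Fin n → ℝ))
    refine this.trans (le_of_eq ?_)
    simp [Pi.norm_single]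
  have hprod : ∀ (w : Σ k : ℕ, (Fin k → Fin n)) (x : Fin n → ℝ),
      ∏ j, x (w.2 j) = ∏ i, x i ^ ct w i := by
    intro w x
    rw [← Finset.prod_fiberwise' Finset.univ w.2 x]
    simp [hct]
  refine ⟨fun β => ∑' b : ct ⁻¹' {β}, c b, min 1 (R / (n + 1)), by positivity, min_le_left _ _, ?_⟩
  intro x hx
  have hxR : ∀ i, |x i| ≤ R / (n + 1) := fun i => (hx i).trans (min_le_right _ _)
  have hsum : Summable (fun w : (Σ k : ℕ, (Fin k → Fin n)) => ‖c w * ∏ j, x (w.2 j)‖) := by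
    rw [summable_sigma_of_nonneg (fun _ => norm_nonneg _)]
    refine ⟨fun k => (hasSum_fintype _).summable, ?_⟩
    refine Summable.of_nonneg_of_le (fun k => tsum_nonneg fun _ => norm_nonneg _) ?_
      (p.summable_norm_mul_pow hRrad)
    intro k
    rw [tsum_fintype]
    calc ∑ s : Fin k → Fin n, ‖c ⟨k, s⟩ * ∏ j, x (s j)‖
        ≤ ∑ s : Fin k → Fin n, ‖p k‖ * ((R : ℝ) / (n + 1)) ^ k := by
          refine Finset.sum_le_sum fun s _ => ?_
          rw [norm_mul]
          refine mul_le_mul (hcb ⟨k, s⟩) ?_ (norm_nonneg _) (norm_nonneg _)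
          rw [norm_prod]
          calc ∏ j, ‖x (s j)‖ ≤ ∏ j : Fin k, ((R : ℝ) / (n + 1)) :=
                Finset.prod_le_prod (fun _ _ => norm_nonneg _) (fun j _ => hxR (s j))
            _ = _ := by rw [Finset.prod_const, Finset.card_univ, Fintype.card_fin]
      _ = ‖p k‖ * ((n : ℝ) * (R / (n + 1))) ^ k := by
          simp [mul_pow]; ring
      _ ≤ ‖p k‖ * (R : ℝ) ^ k := by
          gcongr
          rw [mul_div_assoc', div_le_iff₀ (by positivity)]
          nlinarith
  have hx0 : x ∈ Metric.eball (0 : Fin n → ℝ) ρ := by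
    rw [Metric.mem_eball, edist_zero_right]
    refine lt_of_le_of_lt ?_ hR
    rw [enorm_le_coe, ← NNReal.coe_le_coe, coe_nnnorm]
    rw [pi_norm_le_iff_of_nonneg hR0'.le]
    intro i
    refine (hxR i).trans ?_
    rw [div_le_iff₀ (by positivity)]
    nlinarith [(Nat.cast_nonneg n : (0:ℝ) ≤ n)]
  have h1 := hp.hasSum hx0
  have h2 : HasSum (fun w : (Σ k : ℕ, (Fin k → Fin n)) => c w * ∏ j, x (w.2 j)) (G x) := by
    have h3 := hsum.of_norm.hasSum
    have h4 := h3.sigma (fun k => hasSum_fintype _)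
    have h5 : (fun k => ∑ s : Fin k → Fin n, c ⟨k, s⟩ * ∏ j, x (s j))
        = fun k => p k fun _ => x := by
      funext k
      have hxs : x = ∑ i, x i • (Pi.single i 1 : Fin n → ℝ) := by
        simpa using (pi_eq_sum_univ' x)
      conv_rhs => rw [hxs]
      rw [ContinuousMultilinearMap.map_sum]
      refine Finset.sum_congr rfl fun s _ => ?_
      rw [ContinuousMultilinearMap.map_smul_univ, smul_eq_mul, mul_comm]
    simp only [h5] at h4
    rw [zero_add] at h1
    rwa [h4.unique h1] at h3
  have h6 := h2.tsum_fiberwise ct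
  refine (congrArg (fun q => HasSum q (G x)) (funext fun β => ?_)).mpr h6
  rw [← tsum_mul_right]
  refine tsum_congr fun b => ?_
  have : ct b = β := b.2
  rw [hprod, this]

theorem aux_word {n : ℕ} (α : Fin n → ℕ) :
    ∃ w : Fin (∑ i, α i) → Fin n, ∀ y : Fin n → ℝ, ∏ j, y (w j) = ∏ i, y i ^ α i := by
  have e : Fin (∑ i, α i) ≃ Σ i, Fin (α i) := finSigmaFinEquiv.symm
  refine ⟨fun j => (e j).1, fun y => ?_⟩
  rw [Equiv.prod_comp e (fun s : Σ i, Fin (α i) => y s.1)]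
  rw [Fintype.prod_sigma]
  simp

theorem aux_mono {n : ℕ} (α : Fin n → ℕ) (k : ℕ) :
    ∃ M : ContinuousMultilinearMap ℝ (fun _ : Fin k => (Fin n → ℝ)) ℝ, ‖M‖ ≤ 1 ∧
      (∑ i, α i = k → ∀ y : Fin n → ℝ, M (fun _ => y) = ∏ i, y i ^ α i) := by
  by_cases h : ∑ i, α i = k
  · subst h
    obtain ⟨w, hw⟩ := aux_word α
    refine ⟨(ContinuousMultilinearMap.mkPiAlgebra ℝ (Fin (∑ i, α i)) ℝ).compContinuousLinearMap
      (fun j => ContinuousLinearMap.proj (w j)), ?_, ?_⟩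
    · refine ContinuousMultilinearMap.opNorm_le_bound zero_le_one fun m => ?_
      simp only [ContinuousMultilinearMap.compContinuousLinearMap_apply,
        ContinuousMultilinearMap.mkPiAlgebra_apply, ContinuousLinearMap.proj_apply, one_mul]
      rw [norm_prod]
      exact Finset.prod_le_prod (fun _ _ => norm_nonneg _) (fun j _ => norm_le_pi_norm _ _)
    · intro _ y
      simpa using hw y
  · exact ⟨0, by simp, fun h' => absurd h' h⟩

theorem aux_analytic {n : ℕ} (f : (Fin n → ℕ) → ℝ) (r : ℝ) (hr : 0 < r)
    (hs : Summable (fun α : Fin n → ℕ => |f α| * r ^ (∑ i, α i))) :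
    AnalyticAt ℝ (fun y : Fin n → ℝ => ∑' α : Fin n → ℕ, f α * ∏ i, y i ^ α i) 0 := by
  choose M hM1 hM2 using fun (α : Fin n → ℕ) (k : ℕ) => aux_mono α k
  let p : FormalMultilinearSeries ℝ (Fin n → ℝ) ℝ := fun k =>
    ∑ α ∈ Finset.piAntidiag Finset.univ k, f α • M α k
  have hrad : ((r.toNNReal : NNReal) : ENNReal) ≤ p.radius := by
    refine p.le_radius_of_bound (∑' α : Fin n → ℕ, |f α| * r ^ (∑ i, α i)) fun k => ?_
    rw [Real.coe_toNNReal _ hr.le]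
    calc ‖p k‖ * r ^ k ≤ (∑ α ∈ Finset.piAntidiag Finset.univ k, |f α|) * r ^ k := by
          gcongr
          refine (norm_sum_le _ _).trans (Finset.sum_le_sum fun α _ => ?_)
          rw [norm_smul]
          exact mul_le_of_le_one_right (norm_nonneg _) (hM1 _ _)
      _ = ∑ α ∈ Finset.piAntidiag Finset.univ k, |f α| * r ^ (∑ i, α i) := by
          rw [Finset.sum_mul]
          refine Finset.sum_congr rfl fun α hα => ?_
          rw [(Finset.mem_piAntidiag.1 hα).1]
      _ ≤ _ := hs.sum_le_tsum _ (fun _ _ => by positivity)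
  refine ⟨p, r.toNNReal, hrad, by simpa using hr, ?_⟩
  intro y hy
  rw [zero_add]
  have hy' : ∀ i, |y i| ≤ r := by
    rw [Metric.mem_eball, edist_zero_right] at hy
    have : ‖y‖ ≤ r := by
      have := hy.le
      rw [enorm_le_coe, ← NNReal.coe_le_coe, coe_nnnorm, Real.coe_toNNReal _ hr.le] at this
      exact this
    exact fun i => (norm_le_pi_norm y i).trans this
  have hsy : Summable (fun α : Fin n → ℕ => f α * ∏ i, y i ^ α i) := by
    refine Summable.of_norm_bounded hs fun α => ?_
    rw [norm_mul, norm_prod, Real.norm_eq_abs]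
    gcongr
    rw [← Finset.prod_pow_eq_pow_sum]
    refine Finset.prod_le_prod (fun _ _ => norm_nonneg _) fun i _ => ?_
    rw [norm_pow]
    exact pow_le_pow_left₀ (norm_nonneg _) (hy' i) _
  have h6 := hsy.hasSum.tsum_fiberwise (fun α : Fin n → ℕ => ∑ i, α i)
  convert h6 using 2 with k
  have hset : ((fun α : Fin n → ℕ => ∑ i, α i) ⁻¹' {k})
      = ↑(Finset.piAntidiag (Finset.univ : Finset (Fin n)) k) := by
    ext α; simp
  rw [hset, Finset.tsum_subtype' (Finset.piAntidiag (Finset.univ : Finset (Fin n)) k)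
    (fun α : Fin n → ℕ => f α * ∏ i, y i ^ α i)]
  simp only [p, sum_apply, smul_apply, smul_eq_mul]
  refine Finset.sum_congr rfl fun α hα => ?_
  rw [hM2 α k (Finset.mem_piAntidiag.1 hα).1]

theorem aux_matrix {n : ℕ} (L : List ((Fin n → ℝ) → (Fin n → ℝ)))
    (hL : ∀ σ ∈ L, IsElemMonomialChange σ) :
    ∃ A : Fin n → Fin n → ℕ,
      (∀ x i, L.foldr (· ∘ ·) id x i = ∏ j, x j ^ A i j) ∧
      (∀ v : Fin n → ℝ, (∀ i, ∑ j, (A i j : ℝ) * v j = 0) → v = 0) := by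
  induction L with
  | nil =>
    refine ⟨fun i j => if i = j then 1 else 0, fun x i => ?_, fun v hv => ?_⟩
    · simp [pow_ite]
    · funext i; simpa using hv i
  | cons σ L ih =>
    obtain ⟨A, hA, hinj⟩ := ih (fun σ hσ => hL σ (List.mem_cons_of_mem _ hσ))
    rcases hL σ List.mem_cons_self with ⟨e, rfl⟩ | ⟨r, _, rfl⟩
    · refine ⟨fun i j => A (e i) j, fun x i => ?_, fun v hv => hinj v fun i => ?_⟩
      · simp [hA]
      · simpa using hv (e.symm i)
    · refine ⟨fun i j => if i < r then A i j + A r j else A i j, fun x i => ?_,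
        fun v hv => hinj v fun i => ?_⟩
      · simp only [List.foldr_cons, Function.comp_apply, hA]
        split_ifs
        · rw [← Finset.prod_mul_distrib]; simp [pow_add]
        · rfl
      · have hr : ∑ j, (A r j : ℝ) * v j = 0 := by simpa using hv r
        have hi := hv i
        by_cases h : i < r
        · simp only [h, if_true, Nat.cast_add, add_mul, Finset.sum_add_distrib, hr, add_zero] at hi
          exact hi
        · simpa [h] using hi

theorem aux_digits {n : ℕ} (β₀ : Fin n → ℕ) :
    ∃ l : Fin n → ℕ, (∀ j, 0 < l j) ∧
      ∀ β : Fin n → ℕ, ∑ j, β j * l j = ∑ j, β₀ j * l j → β = β₀ := by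
  set s := ∑ j, β₀ j with hs
  set d := 2 * s + 2 with hd
  have hdn : 0 < d ^ n := by positivity
  refine ⟨fun j => d ^ n + d ^ (j : ℕ), fun j => by positivity, fun β hβ => ?_⟩
  have hle : ∑ j, β j ≤ 2 * s := by
    have h1 : (∑ j, β j) * d ^ n ≤ ∑ j, β j * (d ^ n + d ^ (j : ℕ)) := by
      rw [Finset.sum_mul]
      exact Finset.sum_le_sum fun j _ => Nat.mul_le_mul_left _ (Nat.le_add_right _ _)
    have h2 : ∑ j, β₀ j * (d ^ n + d ^ (j : ℕ)) ≤ s * (2 * d ^ n) := by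
      rw [hs, Finset.sum_mul]
      refine Finset.sum_le_sum fun j _ => Nat.mul_le_mul_left _ ?_
      have : d ^ (j : ℕ) ≤ d ^ n := Nat.pow_le_pow_right (by omega) j.2.le
      omega
    have h3 : (∑ j, β j) * d ^ n ≤ (2 * s) * d ^ n := by
      rw [hβ] at h1
      calc _ ≤ _ := h1
        _ ≤ _ := h2
        _ = _ := by ring
    exact Nat.le_of_mul_le_mul_right h3 hdn
  have hb : ∀ j, β j < d := fun j => by
    have := Finset.single_le_sum (f := β) (fun _ _ => Nat.zero_le _) (Finset.mem_univ j)
    omega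
  have hb0 : ∀ j, β₀ j < d := fun j => by
    have := Finset.single_le_sum (f := β₀) (fun _ _ => Nat.zero_le _) (Finset.mem_univ j)
    omega
  let u : Fin n → Fin d := fun j => ⟨β j, hb j⟩
  let u₀ : Fin n → Fin d := fun j => ⟨β₀ j, hb0 j⟩
  have hu : ((finFunctionFinEquiv u : Fin (d ^ n)) : ℕ) = ∑ j, β j * d ^ (j : ℕ) :=
    finFunctionFinEquiv_apply u
  have hu₀ : ((finFunctionFinEquiv u₀ : Fin (d ^ n)) : ℕ) = ∑ j, β₀ j * d ^ (j : ℕ) :=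
    finFunctionFinEquiv_apply u₀
  simp only [mul_add, Finset.sum_add_distrib] at hβ
  rw [← Finset.sum_mul, ← Finset.sum_mul, ← hu, ← hu₀] at hβ
  have h4 := congrArg (· % d ^ n) hβ
  simp only [Nat.mul_add_mod_self_right, Nat.mod_eq_of_lt (Fin.is_lt _)] at h4
  have h5 : u = u₀ := finFunctionFinEquiv.injective (Fin.ext h4)
  funext j
  exact congrArg Fin.val (congrFun h5 j)

theorem aux_vanish {n : ℕ} (F : (Fin n → ℝ) → ℝ) (hmon : MonomialCurveCondition F)
    (A : Fin n → Fin n → ℕ) (hrow : ∀ i, ∃ j, A i j ≠ 0)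
    (g : (Fin n → ℕ) → ℝ) (r : ℝ) (hr : 0 < r) (hr1 : r ≤ 1)
    (hg : ∀ x : Fin n → ℝ, (∀ i, |x i| ≤ r) →
      HasSum (fun β : Fin n → ℕ => g β * ∏ i, x i ^ β i) (F (fun i => ∏ j, x j ^ A i j)))
    (β₀ : Fin n → ℕ) (hβ₀ : β₀ ∉ Set.range (fun (α : Fin n → ℕ) j => ∑ i, α i * A i j)) :
    g β₀ = 0 := by
  obtain ⟨l, hl, huniq⟩ := aux_digits β₀
  obtain ⟨p, hp, hpc⟩ := hmon (fun i => ∑ j, A i j * l j) (fun i => by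
    obtain ⟨j, hj⟩ := hrow i
    exact Finset.sum_pos' (fun _ _ => Nat.zero_le _)
      ⟨j, Finset.mem_univ _, Nat.mul_pos (Nat.pos_of_ne_zero hj) (hl j)⟩)
  set wt : (Fin n → ℕ) → ℕ := fun β => ∑ j, β j * l j with hwt
  set c : ℕ → ℝ := fun k => ∑' b : wt ⁻¹' {k}, g b with hc
  have hq : HasFPowerSeriesAt (fun t : ℝ => F (fun i => t ^ (∑ j, A i j * l j)))
      (FormalMultilinearSeries.ofScalars ℝ c) 0 := by
    rw [hasFPowerSeriesAt_iff]
    filter_upwards [Metric.closedBall_mem_nhds (0 : ℝ) hr] with t ht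
    have ht' : |t| ≤ r := by simpa using ht
    have h1 := hg (fun j => t ^ l j) (fun j => by
      rw [abs_pow]
      exact (pow_le_of_le_one (abs_nonneg _) (ht'.trans hr1) (hl j).ne').trans ht')
    have h2 := h1.tsum_fiberwise wt
    have h3 : F (fun i => ∏ j, (t ^ l j) ^ A i j) = F (fun i => (0 + t) ^ (∑ j, A i j * l j)) := by
      congr 1; funext i
      rw [zero_add, ← Finset.prod_pow_eq_pow_sum]
      refine Finset.prod_congr rfl fun j _ => ?_
      rw [← pow_mul, mul_comm]
    rw [h3] at h2
    refine (congrArg (fun q => HasSum q _) (funext fun k => ?_)).mpr h2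
    rw [FormalMultilinearSeries.coeff_ofScalars, smul_eq_mul, mul_comm, hc, ← tsum_mul_right]
    refine tsum_congr fun b => ?_
    obtain ⟨b, hb⟩ := b
    have hb : ∑ j, b j * l j = k := hb
    congr 1
    change t ^ k = ∏ i, (t ^ l i) ^ b i
    rw [← hb, ← Finset.prod_pow_eq_pow_sum]
    refine Finset.prod_congr rfl fun j _ => ?_
    rw [← pow_mul, mul_comm]
  have hpq := hp.eq_formalMultilinearSeries hq
  have hk := hpc (wt β₀) (by
    rw [AddSubmonoid.mem_closure_range_iff_of_fintype]
    rintro ⟨α, hα⟩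
    refine hβ₀ ⟨α, huniq _ ?_⟩
    have : ∑ j, β₀ j * l j = ∑ i, α i • ∑ j, A i j * l j := hα
    rw [this]
    simp only [smul_eq_mul, Finset.sum_mul, Finset.mul_sum]
    rw [Finset.sum_comm]
    simp only [mul_assoc])
  rw [hpq, FormalMultilinearSeries.coeff_ofScalars] at hk
  rw [← hk, hc]
  have hset : wt ⁻¹' {wt β₀} = {β₀} := by
    ext β
    simp only [Set.mem_preimage, Set.mem_singleton_iff]
    exact ⟨fun h => huniq β h, fun h => by rw [h]⟩
  have h7 : ∑' b : (wt ⁻¹' {wt β₀} : Set (Fin n → ℕ)), g b = g β₀ := by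
    rw [hset, tsum_singleton β₀ g]
  exact h7.symm

/-- The image of every small positive box contains an open set. -/
theorem aux_open {n : ℕ} (A : Fin n → Fin n → ℕ)
    (hinj : ∀ v : Fin n → ℝ, (∀ i, ∑ j, (A i j : ℝ) * v j = 0) → v = 0) (δ : ℝ) (hδ : 0 < δ) :
    ∃ V : Set (Fin n → ℝ), IsOpen V ∧ (fun i => ∏ j, (δ / 2) ^ A i j) ∈ V ∧
      ∀ y ∈ V, ∃ x : Fin n → ℝ, (∀ i, |x i| ≤ δ) ∧ y = fun i => ∏ j, x j ^ A i j := by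
  set M : Matrix (Fin n) (Fin n) ℝ := Matrix.of fun i j => (A i j : ℝ) with hM
  have hMi : Function.Injective M.mulVec := by
    intro v w hvw
    rw [← sub_eq_zero]
    refine hinj _ fun i => ?_
    have := congrFun hvw i
    simp only [Matrix.mulVec, dotProduct, hM, Matrix.of_apply] at this
    simp only [Pi.sub_apply, mul_sub, Finset.sum_sub_distrib, this, sub_self]
  have hu : IsUnit M := Matrix.mulVec_injective_iff_isUnit.1 hMi
  have hdet := (Matrix.isUnit_iff_isUnit_det M).1 hu
  have hMB : M * M⁻¹ = 1 := Matrix.mul_nonsing_inv M hdet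
  have hBM : M⁻¹ * M = 1 := Matrix.nonsing_inv_mul M hdet
  have key : ∀ x : Fin n → ℝ, (∀ i, 0 < x i) →
      (fun i => Real.log (∏ j, x j ^ A i j)) = M.mulVec (fun j => Real.log (x j)) := by
    intro x hx
    funext i
    rw [Real.log_prod (fun j _ => (pow_pos (hx j) _).ne')]
    simp [Matrix.mulVec, dotProduct, hM]
  set P : Set (Fin n → ℝ) := {y | ∀ i, 0 < y i} with hP
  have hPo : IsOpen P := by
    simp only [hP, Set.ofPred_forall]
    exact isOpen_iInter_of_finite fun i => isOpen_lt continuous_const (continuous_apply i)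
  have hcont : ContinuousOn (fun y : Fin n → ℝ => M⁻¹.mulVec (fun i => Real.log (y i))) P := by
    have : ContinuousOn (fun y : Fin n → ℝ => (fun i => Real.log (y i))) P :=
      continuousOn_pi.2 fun i => ContinuousOn.log (continuous_apply i).continuousOn
        (fun y hy => (hy i).ne')
    exact (Continuous.matrix_mulVec continuous_const continuous_id).comp_continuousOn this
  set Q : Set (Fin n → ℝ) := {u | ∀ j, u j < Real.log δ} with hQ
  have hQo : IsOpen Q := by
    simp only [hQ, Set.ofPred_forall]
    exact isOpen_iInter_of_finite fun i => isOpen_lt (continuous_apply i) continuous_const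
  refine ⟨P ∩ (fun y : Fin n → ℝ => M⁻¹.mulVec (fun i => Real.log (y i))) ⁻¹' Q,
    hcont.isOpen_inter_preimage hPo hQo, ⟨fun i => ?_, ?_⟩, ?_⟩
  · exact Finset.prod_pos fun j _ => by positivity
  · have := key (fun _ => δ / 2) (fun _ => by positivity)
    simp only [Set.mem_preimage]
    rw [this, Matrix.mulVec_mulVec, hBM, Matrix.one_mulVec]
    intro j
    exact Real.log_lt_log (by positivity) (by linarith)
  · rintro y ⟨hy, hyQ⟩
    refine ⟨fun j => Real.exp (M⁻¹.mulVec (fun i => Real.log (y i)) j), fun j => ?_, ?_⟩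
    · rw [abs_of_pos (Real.exp_pos _), ← Real.le_log_iff_exp_le hδ]
      exact (hyQ j).le
    · have := key (fun j => Real.exp (M⁻¹.mulVec (fun i => Real.log (y i)) j))
        (fun _ => Real.exp_pos _)
      simp only [Real.log_exp] at this
      rw [Matrix.mulVec_mulVec, hMB, Matrix.one_mulVec] at this
      funext i
      have hi := congrFun this i
      exact (Real.log_injOn_pos (Finset.prod_pos fun j _ => pow_pos (Real.exp_pos _) _)
        (hy i) hi).symm

/-- Two arc-analytic functions near `0` agreeing on open sets arbitrarily close to `0` agree. -/
theorem aux_identity {n : ℕ} (U : Set (Fin n → ℝ)) (hU : IsOpen U) (h0 : (0 : Fin n → ℝ) ∈ U)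
    (F f : (Fin n → ℝ) → ℝ) (harc : ArcAnalyticOn U F) (hf : AnalyticAt ℝ f 0)
    (hV : ∀ ε > 0, ∃ V : Set (Fin n → ℝ), IsOpen V ∧ (V ∩ Metric.ball 0 ε).Nonempty ∧
      ∀ y ∈ V, F y = f y) :
    AnalyticAt ℝ F 0 := by
  obtain ⟨ε, hε, hb⟩ := Metric.eventually_nhds_iff_ball.1
    (hf.eventually_analyticAt.and (hU.mem_nhds h0))
  obtain ⟨V, hVo, ⟨z, hzV, hzb⟩, hVF⟩ := hV ε hε
  refine hf.congr ?_
  filter_upwards [Metric.ball_mem_nhds (0 : Fin n → ℝ) hε] with y hy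
  set φ : ℝ → (Fin n → ℝ) := fun t => z + t • (y - z) with hφ
  have hφa : ∀ t, AnalyticAt ℝ φ t := fun t =>
    analyticAt_const.add (analyticAt_id.smul analyticAt_const)
  have hφc : Continuous φ := by fun_prop
  have hseg : ∀ t ∈ Set.Icc (0 : ℝ) 1, φ t ∈ Metric.ball (0 : Fin n → ℝ) ε := fun t ht =>
    (convex_ball (0 : Fin n → ℝ) ε).add_smul_sub_mem hzb hy ht
  have h1 : AnalyticOnNhd ℝ (fun t => F (φ t)) (Set.Icc 0 1) := fun t ht =>
    harc φ hφa t (hb _ (hseg t ht)).2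
  have h2 : AnalyticOnNhd ℝ (fun t => f (φ t)) (Set.Icc 0 1) := fun t ht =>
    (hb _ (hseg t ht)).1.comp (hφa t)
  have hφ0 : φ 0 = z := by simp [hφ]
  have hφ1 : φ 1 = y := by simp [hφ]
  have h3 : (fun t => F (φ t)) =ᶠ[nhds 0] (fun t => f (φ t)) := by
    have : φ ⁻¹' V ∈ nhds (0 : ℝ) :=
      (hVo.preimage hφc).mem_nhds (by simpa [hφ0] using hzV)
    filter_upwards [this] with t ht using hVF _ ht
  have h4 := h1.eqOn_of_preconnected_of_eventuallyEq h2 isPreconnected_Icc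
    (Set.left_mem_Icc.2 zero_le_one) h3 (Set.right_mem_Icc.2 zero_le_one)
  simpa [hφ1] using h4.symm

/-- Steps 2 and 3 of the proof of Theorem 1. If `F` is arc-analytic on an
open neighborhood `U` of the origin, becomes real analytic at the origin after a finite
composite of elementary monomial coordinate changes, and satisfies the monomial curve
condition at `0`, then `F` is real analytic at the origin. -/
theorem analyticAt_of_monomialCurveCondition_of_elemChanges
    (n : ℕ) (U : Set (Fin n → ℝ)) (hU : IsOpen U) (h0 : (0 : Fin n → ℝ) ∈ U)
    (F : (Fin n → ℝ) → ℝ) (harc : ArcAnalyticOn U F)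
    (hσ : ∃ L : List ((Fin n → ℝ) → (Fin n → ℝ)),
      (∀ σ ∈ L, IsElemMonomialChange σ) ∧
      AnalyticAt ℝ (F ∘ L.foldr (· ∘ ·) id) 0)
    (hmon : MonomialCurveCondition F) :
    AnalyticAt ℝ F 0 := by
  obtain ⟨L, hL, hG⟩ := hσ
  obtain ⟨A, hA, hinj⟩ := aux_matrix L hL
  have hΦ : L.foldr (· ∘ ·) id = fun x i => ∏ j, x j ^ A i j := by
    funext x i; exact hA x i
  rw [hΦ] at hG
  obtain ⟨g, r, hr, hr1, hg⟩ := aux_expand _ hG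
  simp only [Function.comp_apply] at hg
  set T : (Fin n → ℕ) → (Fin n → ℕ) := fun α j => ∑ i, α i * A i j with hT
  -- the transposed matrix is injective
  have hTinj : Function.Injective T := by
    set M : Matrix (Fin n) (Fin n) ℝ := Matrix.of fun i j => (A i j : ℝ) with hM
    have hMi : Function.Injective M.mulVec := by
      intro v w hvw
      rw [← sub_eq_zero]
      refine hinj _ fun i => ?_
      have := congrFun hvw i
      simp only [Matrix.mulVec, dotProduct, hM, Matrix.of_apply] at this
      simp only [Pi.sub_apply, mul_sub, Finset.sum_sub_distrib, this, sub_self]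
    have hu : IsUnit M := Matrix.mulVec_injective_iff_isUnit.1 hMi
    have hv : Function.Injective M.vecMul := Matrix.vecMul_injective_iff_isUnit.2 hu
    intro α α' h
    have : (fun i => (α i : ℝ)) = fun i => (α' i : ℝ) := by
      apply hv
      funext j
      have hj := congrArg (Nat.cast : ℕ → ℝ) (congrFun h j)
      simpa [hT, hM, Matrix.vecMul, dotProduct] using hj
    funext i
    exact_mod_cast congrFun this i
  have hrow : ∀ i, ∃ j, A i j ≠ 0 := by
    intro i
    by_contra! hz
    have : T (Pi.single i 1) = T 0 := by
      funext j
      simp [hT, Pi.single_apply, hz]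
    have := congrFun (hTinj this) i
    simp at this
  have hvan := aux_vanish F hmon A hrow g r hr hr1 hg
  -- the series of `F`
  set K := ∑ i, ∑ j, A i j with hK
  have hTK : ∀ α, ∑ j, T α j ≤ K * ∑ i, α i := by
    intro α
    simp only [hT]
    rw [Finset.sum_comm, Finset.mul_sum]
    refine Finset.sum_le_sum fun i _ => ?_
    rw [← Finset.mul_sum, mul_comm]
    refine Nat.mul_le_mul_right _ ?_
    exact Finset.single_le_sum (f := fun i => ∑ j, A i j) (fun _ _ => Nat.zero_le _)
      (Finset.mem_univ i)
  have hsg : Summable (fun β : Fin n → ℕ => |g β| * r ^ (∑ i, β i)) := by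
    have h1 := (hg (fun _ => r) (fun _ => by rw [abs_of_pos hr])).summable.norm
    refine h1.congr fun β => ?_
    rw [Finset.prod_pow_eq_pow_sum, norm_mul, Real.norm_eq_abs, Real.norm_eq_abs,
      abs_of_pos (pow_pos hr _)]
  have hsf : Summable (fun α : Fin n → ℕ => |g (T α)| * (r ^ K) ^ (∑ i, α i)) := by
    refine Summable.of_nonneg_of_le (fun α => by positivity) (fun α => ?_)
      (hsg.comp_injective hTinj)
    simp only [Function.comp_apply]
    gcongr
    rw [← pow_mul]
    exact pow_le_pow_of_le_one hr.le hr1 (hTK α)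
  have hfa := aux_analytic (fun α => g (T α)) (r ^ K) (by positivity) hsf
  refine aux_identity U hU h0 F _ harc hfa fun ε hε => ?_
  set δ := min r ε with hδ
  have hδ0 : 0 < δ := lt_min hr hε
  obtain ⟨V, hVo, hVm, hVx⟩ := aux_open A hinj δ hδ0
  refine ⟨V, hVo, ⟨_, hVm, ?_⟩, fun y hy => ?_⟩
  · rw [mem_ball_zero_iff, pi_norm_lt_iff hε]
    intro i
    obtain ⟨j, hj⟩ := hrow i
    have hd1 : δ / 2 ≤ 1 := by linarith [min_le_left r ε]
    rw [Real.norm_eq_abs, abs_of_pos (Finset.prod_pos fun j _ => by positivity),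
      Finset.prod_pow_eq_pow_sum]
    have hne : ∑ j, A i j ≠ 0 := fun h =>
      hj (Finset.sum_eq_zero_iff.1 h j (Finset.mem_univ j))
    have := pow_le_of_le_one (by positivity) hd1 hne
    have := min_le_right r ε
    linarith
  · obtain ⟨x, hx, rfl⟩ := hVx y hy
    have h1 := hg x (fun i => (hx i).trans (min_le_left _ _))
    rw [← hTinj.hasSum_iff (fun β hβ => by rw [hvan β hβ, zero_mul])] at h1
    rw [← h1.tsum_eq]
    refine tsum_congr fun α => ?_
    simp only [Function.comp_apply]
    congr 1
    simp only [hT, ← Finset.prod_pow_eq_pow_sum, ← Finset.prod_pow, ← pow_mul]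
    rw [Finset.prod_comm]
    simp only [mul_comm]
end

section
/- Let h₀,…,h_r be real analytic functions on an open neighborhood U of the origin in ℝⁿ, not all having identically zero germ at the origin. Then there exists a finite composite σ̄ : ℝⁿ → ℝⁿ of elementary monomial coordinate changes, an exponent vector d ∈ ℕⁿ, an open neighborhood V of the origin in ℝⁿ with σ̄(V) ⊆ U, and real analytic functions h̃₀,…,h̃_r on V, such that hᵢ(σ̄(z)) = z₁^{d₁}⋯zₙ^{dₙ}·h̃ᵢ(z) for all z ∈ V and all 0 ≤ i ≤ r, and h̃_j(0) ≠ 0 for at least one 0 ≤ j ≤ r. -/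
open Filter Topology MeasureTheory

lemma mr_analytic_integral {E : Type*} [NormedAddCommGroup E] [NormedSpace ℝ E]
    (f : E → ℝ) (hf : AnalyticAt ℝ f 0) (A : ℝ → E →L[ℝ] E) (hA : Continuous A)
    (hA1 : ∀ t ∈ Set.Icc (0:ℝ) 1, ‖A t‖ ≤ 1) :
    AnalyticAt ℝ (fun x => ∫ t in (0:ℝ)..1, f (A t x)) 0 := by
  obtain ⟨p, r, hp⟩ := hf
  let B : (n : ℕ) → ℝ → ContinuousMultilinearMap ℝ (fun _ : Fin n => E) ℝ :=
    fun n t => (p n).compContinuousLinearMap (fun _ => A t)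
  have hB : ∀ n, Continuous (B n) := by
    intro n
    have h1 := (ContinuousMultilinearMap.compContinuousLinearMapContinuousMultilinear ℝ
      (fun _ : Fin n => E) (fun _ : Fin n => E) ℝ).cont
    have h2 : Continuous fun t : ℝ => (fun _ : Fin n => A t) := continuous_pi fun _ => hA
    exact (h1.comp h2).clm_apply continuous_const
  have hBn : ∀ n, ∀ t ∈ Set.Icc (0:ℝ) 1, ‖B n t‖ ≤ ‖p n‖ := by
    intro n t ht
    refine (ContinuousMultilinearMap.norm_compContinuousLinearMap_le _ _).trans ?_
    refine mul_le_of_le_one_right (norm_nonneg _) ?_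
    exact Finset.prod_le_one (fun _ _ => norm_nonneg _) (fun _ _ => hA1 t ht)
  let q : FormalMultilinearSeries ℝ E ℝ := fun n => ∫ t in (0:ℝ)..1, B n t
  have hu : Set.uIoc (0:ℝ) 1 ⊆ Set.Icc 0 1 := by
    rw [Set.uIoc_of_le zero_le_one]; exact Set.Ioc_subset_Icc_self
  have hq : ∀ n, ‖q n‖ ≤ ‖p n‖ := by
    intro n
    have := intervalIntegral.norm_integral_le_of_norm_le_const (a := (0:ℝ)) (b := 1)
      (f := B n) (C := ‖p n‖) (fun t ht => hBn n t (hu ht))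
    simpa using this
  have hrad : p.radius ≤ q.radius := by
    refine ENNReal.le_of_forall_nnreal_lt fun s hs => ?_
    obtain ⟨C, -, hC⟩ := p.norm_mul_pow_le_of_lt_radius hs
    exact q.le_radius_of_bound C fun n =>
      (mul_le_mul_of_nonneg_right (hq n) (by positivity)).trans (hC n)
  refine ⟨q, r, hp.r_le.trans hrad, hp.r_pos, ?_⟩
  intro y hy
  have hqe : ∀ n, (q n fun _ => y) = ∫ t in (0:ℝ)..1, p n fun _ => A t y := by
    intro n
    have := (ContinuousMultilinearMap.apply ℝ (fun _ : Fin n => E) ℝ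
      (fun _ => y)).intervalIntegral_comp_comm (f := B n) (a := 0) (b := 1) (μ := volume)
        ((hB n).intervalIntegrable _ _)
    exact this.symm
  simp only [hqe, zero_add]
  have hy' : (‖y‖₊ : ENNReal) < p.radius := by
    have : (‖y‖₊ : ENNReal) < r := by simpa [enorm_eq_nnnorm] using hy
    exact this.trans_le hp.r_le
  have hyA : ∀ t ∈ Set.Icc (0:ℝ) 1, ‖A t y‖ ≤ ‖y‖ := fun t ht =>
    ((A t).le_opNorm y).trans (mul_le_of_le_one_left (norm_nonneg _) (hA1 t ht))
  refine intervalIntegral.hasSum_integral_of_dominated_convergence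
    (fun n _ => ‖p n‖ * ‖y‖ ^ n) ?_ ?_ ?_ ?_ ?_
  · intro n
    have : Continuous fun t => p n fun _ => A t y :=
      (p n).cont.comp (continuous_pi fun _ => hA.clm_apply continuous_const)
    exact this.aestronglyMeasurable
  · intro n
    refine Eventually.of_forall fun t ht => ?_
    refine ((p n).le_opNorm _).trans ?_
    refine mul_le_mul_of_nonneg_left ?_ (norm_nonneg _)
    rw [Finset.prod_const, Finset.card_univ, Fintype.card_fin]
    exact pow_le_pow_left₀ (norm_nonneg _) (hyA t (hu ht)) _
  · exact Eventually.of_forall fun t _ => by simpa using p.summable_norm_mul_pow hy'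
  · exact intervalIntegrable_const
  · refine Eventually.of_forall fun t ht => ?_
    have := hp.hasSum (y := A t y) ?_
    · simpa using this
    · have h1 : (‖A t y‖₊ : ENNReal) ≤ ‖y‖₊ := by exact_mod_cast hyA t (hu ht)
      have h2 : (‖y‖₊ : ENNReal) < r := by simpa [enorm_eq_nnnorm] using hy
      simpa [enorm_eq_nnnorm] using h1.trans_lt h2

/-- scale coordinate `a` by `t` -/
noncomputable def mrScale {n : ℕ} (a : Fin n) (t : ℝ) : (Fin n → ℝ) →L[ℝ] (Fin n → ℝ) :=
  ContinuousLinearMap.id ℝ _ + (t - 1) •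
    ((ContinuousLinearMap.proj a : (Fin n → ℝ) →L[ℝ] ℝ).smulRight (Pi.single a (1:ℝ)))

lemma mrScale_apply {n : ℕ} (a : Fin n) (t : ℝ) (x : Fin n → ℝ) :
    mrScale a t x = Function.update x a (t * x a) := by
  ext k
  by_cases hk : k = a
  · subst hk; simp [mrScale]; ring
  · simp [mrScale, hk]

lemma mr_hadamard {n : ℕ} (a : Fin n) (f : (Fin n → ℝ) → ℝ) (hf : AnalyticAt ℝ f 0) :
    ∃ R : (Fin n → ℝ) → ℝ, AnalyticAt ℝ R 0 ∧
      ∀ᶠ x in 𝓝 0, f x = f (Function.update x a 0) + x a * R x := by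
  have hA : Continuous (mrScale a) := by unfold mrScale; fun_prop
  have hA1 : ∀ t ∈ Set.Icc (0:ℝ) 1, ‖mrScale a t‖ ≤ 1 := by
    intro t ht
    refine ContinuousLinearMap.opNorm_le_bound _ zero_le_one fun x => ?_
    rw [one_mul, mrScale_apply]
    refine (pi_norm_le_iff_of_nonneg (norm_nonneg _)).2 fun k => ?_
    by_cases hk : k = a
    · subst hk
      simp only [Function.update_self, norm_mul]
      refine (mul_le_of_le_one_left (norm_nonneg _) ?_).trans (norm_le_pi_norm x k)
      rw [Real.norm_eq_abs, abs_of_nonneg ht.1]; exact ht.2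
    · simpa [hk] using norm_le_pi_norm x k
  have hD : AnalyticAt ℝ (fun x => fderiv ℝ f x (Pi.single a 1)) 0 :=
    ((ContinuousLinearMap.apply ℝ ℝ (Pi.single a (1:ℝ) : Fin n → ℝ)).analyticAt _).comp hf.fderiv
  refine ⟨_, mr_analytic_integral _ hD (mrScale a) hA hA1, ?_⟩
  obtain ⟨ε, hε, hball⟩ := hf.exists_ball_analyticOnNhd
  filter_upwards [Metric.ball_mem_nhds _ hε] with x hx
  have hin : ∀ t ∈ Set.uIcc (0:ℝ) 1, mrScale a t x ∈ Metric.ball (0 : Fin n → ℝ) ε := by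
    intro t ht
    rw [Set.uIcc_of_le zero_le_one] at ht
    rw [mem_ball_zero_iff] at hx ⊢
    exact (((mrScale a t).le_opNorm x).trans
      (mul_le_of_le_one_left (norm_nonneg _) (hA1 t ht))).trans_lt hx
  have hpath : ∀ t : ℝ, HasDerivAt (fun t => mrScale a t x) (x a • Pi.single a (1:ℝ)) t := by
    intro t
    have : (fun t => mrScale a t x) = fun t => x + (t - 1) • (x a • (Pi.single a (1:ℝ) : Fin n → ℝ)) := by
      ext t k; simp [mrScale]
    rw [this]
    simpa using (((hasDerivAt_id t).sub_const 1).smul_const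
      (x a • (Pi.single a (1:ℝ) : Fin n → ℝ))).const_add x
  have hder : ∀ t ∈ Set.uIcc (0:ℝ) 1, HasDerivAt (fun t => f (mrScale a t x))
      (x a * fderiv ℝ f (mrScale a t x) (Pi.single a 1)) t := by
    intro t ht
    have h1 := (hball _ (hin t ht)).differentiableAt.hasFDerivAt
    have := h1.comp_hasDerivAt t (hpath t)
    rw [map_smul, smul_eq_mul] at this
    exact this
  have hcont : ContinuousOn (fun t => x a * fderiv ℝ f (mrScale a t x) (Pi.single a 1))
      (Set.uIcc (0:ℝ) 1) := by
    refine continuousOn_const.mul (ContinuousOn.clm_apply ?_ continuousOn_const)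
    exact (hball.fderiv.continuousOn).comp (hA.clm_apply continuous_const).continuousOn hin
  have := intervalIntegral.integral_eq_sub_of_hasDerivAt hder hcont.intervalIntegrable
  rw [intervalIntegral.integral_const_mul] at this
  simp only [mrScale_apply, one_mul, zero_mul, Function.update_eq_self] at this ⊢
  linarith

lemma mr_order_bound {n : ℕ} (a : Fin n) (h : (Fin n → ℝ) → ℝ) (hh : AnalyticAt ℝ h 0)
    (hnz : ¬ ∀ᶠ x in 𝓝 0, h x = 0) :
    ∃ m : ℕ, ∀ d : ℕ, ∀ g : (Fin n → ℝ) → ℝ, AnalyticAt ℝ g 0 →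
      (∀ᶠ x in 𝓝 0, h x = x a ^ d * g x) → d ≤ m := by
  obtain ⟨ε, hε, hball⟩ := hh.exists_ball_analyticOnNhd
  obtain ⟨v, hv, hvn⟩ : ∃ v ∈ Metric.ball (0 : Fin n → ℝ) ε, h v ≠ 0 := by
    by_contra! hc
    exact hnz (by filter_upwards [Metric.ball_mem_nhds _ hε] with x hx using hc x hx)
  let l : ℝ →L[ℝ] (Fin n → ℝ) := (ContinuousLinearMap.id ℝ ℝ).smulRight v
  have hl : ∀ t, l t = t • v := fun t => by simp [l]
  have hF : AnalyticOnNhd ℝ (fun t => h (l t)) (Set.Icc 0 1) := by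
    intro t ht
    refine (hball _ ?_).comp (l.analyticAt t)
    rw [hl, mem_ball_zero_iff, norm_smul, Real.norm_eq_abs, abs_of_nonneg ht.1]
    rw [mem_ball_zero_iff] at hv
    exact (mul_le_of_le_one_left (norm_nonneg _) ht.2).trans_lt hv
  have hF0 : AnalyticAt ℝ (fun t => h (l t)) 0 := hF 0 (by simp)
  have hord : analyticOrderAt (fun t => h (l t)) 0 ≠ ⊤ := by
    intro hc
    rw [analyticOrderAt_eq_top] at hc
    have := hF.eqOn_zero_of_preconnected_of_eventuallyEq_zero isPreconnected_Icc
      (by simp : (0:ℝ) ∈ Set.Icc (0:ℝ) 1) hc (by simp : (1:ℝ) ∈ Set.Icc (0:ℝ) 1)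
    simp [hl] at this
    exact hvn this
  obtain ⟨m, hm⟩ := ENat.ne_top_iff_exists.1 hord
  refine ⟨m, fun d g hg hd => ?_⟩
  have : (d : ℕ∞) ≤ analyticOrderAt (fun t => h (l t)) 0 := by
    rw [natCast_le_analyticOrderAt hF0]
    refine ⟨fun t => (v a) ^ d * g (l t), ?_, ?_⟩
    · have : AnalyticAt ℝ g (l 0) := by simpa using hg
      exact analyticAt_const.mul (this.comp (l.analyticAt 0))
    · have ht : Tendsto l (𝓝 0) (𝓝 0) := by simpa using l.continuous.tendsto 0
      filter_upwards [ht.eventually hd] with t ht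
      rw [ht, hl]
      simp [mul_pow, mul_assoc]
  rw [← hm] at this
  exact_mod_cast this

lemma mr_factor {n : ℕ} {ι : Type*} (a : Fin n) (h : ι → (Fin n → ℝ) → ℝ)
    (hh : ∀ i, AnalyticAt ℝ (h i) 0) (hnz : ∃ i, ¬ ∀ᶠ x in 𝓝 0, h i x = 0)
    (l : (Fin n → ℝ) →L[ℝ] (Fin n → ℝ)) (hll : ∀ x, l (l x) = l x) (hla : ∀ x, l x a = x a)
    (hhl : ∀ i x, h i (l x) = h i x) :
    ∃ (d : ℕ) (g : ι → (Fin n → ℝ) → ℝ), (∀ i, AnalyticAt ℝ (g i) 0) ∧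
      (∀ i, ∀ᶠ x in 𝓝 0, h i x = x a ^ d * g i x) ∧ (∀ i x, g i (l x) = g i x) ∧
      ∃ i, ¬ ∀ᶠ x in 𝓝 0, g i (Function.update x a 0) = 0 := by
  classical
  obtain ⟨i₀, hi₀⟩ := hnz
  obtain ⟨m, hm⟩ := mr_order_bound a (h i₀) (hh i₀) hi₀
  let P : ℕ → Prop := fun d => ∃ g : ι → (Fin n → ℝ) → ℝ, (∀ i, AnalyticAt ℝ (g i) 0) ∧
      (∀ i, ∀ᶠ x in 𝓝 0, h i x = x a ^ d * g i x) ∧ (∀ i x, g i (l x) = g i x)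
  have hP0 : P 0 := ⟨h, hh, fun i => by simp, hhl⟩
  have hbd : ∀ d, P d → d ≤ m := fun d ⟨g, hg, hd, hgl⟩ => hm d _ (hg i₀) (hd i₀)
  obtain ⟨g, hg, hd, hgl⟩ : P (Nat.findGreatest P m) := Nat.findGreatest_spec (Nat.zero_le m) hP0
  refine ⟨_, g, hg, hd, hgl, ?_⟩
  by_contra! hc
  choose R hR hRe using fun i => mr_hadamard a (g i) (hg i)
  have : P (Nat.findGreatest P m + 1) := by
    refine ⟨fun i x => R i (l x), fun i => ?_, fun i => ?_, fun i x => by simp only [hll]⟩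
    · have : AnalyticAt ℝ (R i) (l 0) := by simpa using hR i
      exact this.comp (l.analyticAt 0)
    · have hlt : Tendsto l (𝓝 0) (𝓝 0) := by simpa using l.continuous.tendsto 0
      filter_upwards [hd i, hlt.eventually (hRe i), hlt.eventually (hc i)] with x h1 h2 h3
      rw [hgl, h3, hla] at h2
      rw [h1, h2]; ring
  have h2 := Nat.le_findGreatest (hbd _ this) this
  omega

/-- the move `xᵢ ↦ xᵢ xₖ` -/
def mrE {n : ℕ} (i k : Fin n) (x : Fin n → ℝ) : Fin n → ℝ := Function.update x i (x i * x k)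

/-- composites of moves within `s` -/
inductive MrGen {n : ℕ} (s : Finset (Fin n)) : ((Fin n → ℝ) → (Fin n → ℝ)) → Prop
  | id : MrGen s id
  | step (i k : Fin n) (hik : i ≠ k) (hi : i ∈ s) (hk : k ∈ s) (σ : (Fin n → ℝ) → (Fin n → ℝ))
      (hσ : MrGen s σ) : MrGen s (mrE i k ∘ σ)

lemma MrGen.mono {n : ℕ} {s t : Finset (Fin n)} (hst : s ⊆ t) {σ : (Fin n → ℝ) → (Fin n → ℝ)}
    (h : MrGen s σ) : MrGen t σ := by
  induction h with
  | id => exact .id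
  | step i k hik hi hk σ _ ih => exact .step i k hik (hst hi) (hst hk) σ ih

lemma MrGen.comp {n : ℕ} {s : Finset (Fin n)} {σ τ : (Fin n → ℝ) → (Fin n → ℝ)}
    (h : MrGen s σ) (h' : MrGen s τ) : MrGen s (σ ∘ τ) := by
  induction h with
  | id => exact h'
  | step i k hik hi hk σ _ ih => exact .step i k hik hi hk _ ih

lemma MrGen.zero {n : ℕ} {s : Finset (Fin n)} {σ : (Fin n → ℝ) → (Fin n → ℝ)}
    (h : MrGen s σ) : σ 0 = 0 := by
  induction h with
  | id => rfl
  | step i k hik hi hk σ _ ih => simp [mrE, ih]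

lemma MrGen.analytic {n : ℕ} {s : Finset (Fin n)} {σ : (Fin n → ℝ) → (Fin n → ℝ)}
    (h : MrGen s σ) (x : Fin n → ℝ) : AnalyticAt ℝ σ x := by
  induction h with
  | id => exact analyticAt_id
  | step i k hik hi hk σ _ ih =>
    refine AnalyticAt.comp ?_ ih
    refine AnalyticAt.pi (f := fun j x => mrE i k x j) fun j => ?_
    have hp : ∀ j : Fin n, AnalyticAt ℝ (fun x : Fin n → ℝ => x j) (σ x) := fun j =>
      (ContinuousLinearMap.proj j : (Fin n → ℝ) →L[ℝ] ℝ).analyticAt _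
    by_cases hj : j = i
    · subst hj
      simpa [mrE] using (hp j).fun_mul (hp k)
    · simpa [mrE, hj] using hp j

lemma MrGen.apply_notMem {n : ℕ} {s : Finset (Fin n)} {σ : (Fin n → ℝ) → (Fin n → ℝ)}
    (h : MrGen s σ) {a : Fin n} (ha : a ∉ s) (x : Fin n → ℝ) : σ x a = x a := by
  induction h with
  | id => rfl
  | step i k hik hi hk σ _ ih =>
    have : a ≠ i := fun h => ha (h ▸ hi)
    simp [mrE, this, ih]

lemma MrGen.update {n : ℕ} {s : Finset (Fin n)} {σ : (Fin n → ℝ) → (Fin n → ℝ)}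
    (h : MrGen s σ) {a : Fin n} (ha : a ∉ s) (x : Fin n → ℝ) (c : ℝ) :
    σ (Function.update x a c) = Function.update (σ x) a c := by
  induction h with
  | id => rfl
  | step i k hik hi hk σ _ ih =>
    have h1 : i ≠ a := fun h => ha (h ▸ hi)
    have h2 : k ≠ a := fun h => ha (h ▸ hk)
    simp only [Function.comp_apply, ih, mrE, Function.update_of_ne h1, Function.update_of_ne h2]
    exact Function.update_comm h1.symm _ _ _

lemma mr_foldr_append {n : ℕ} (L M : List ((Fin n → ℝ) → (Fin n → ℝ))) :
    (L ++ M).foldr (· ∘ ·) id = L.foldr (· ∘ ·) id ∘ M.foldr (· ∘ ·) id := by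
  induction L with
  | nil => rfl
  | cons a L ih => simp only [List.cons_append, List.foldr_cons, ih]; rfl

lemma mrE_list {n : ℕ} (i k : Fin n) (hik : i ≠ k) :
    ∃ L : List ((Fin n → ℝ) → (Fin n → ℝ)), (∀ σ ∈ L, IsElemMonomialChange σ) ∧
      L.foldr (· ∘ ·) id = mrE i k := by
  have hn : 1 < n := by
    have := i.2; have := k.2
    have : (i : ℕ) ≠ k := fun h => hik (Fin.ext h)
    omega
  let z : Fin n := ⟨0, by omega⟩
  let o : Fin n := ⟨1, hn⟩
  have hzo : z ≠ o := by simp [z, o]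
  obtain ⟨e, he0, he1⟩ : ∃ e : Equiv.Perm (Fin n), e z = i ∧ e o = k := by
    let e1 : Equiv.Perm (Fin n) := Equiv.swap z i
    have h0 : e1 z = i := Equiv.swap_apply_left _ _
    refine ⟨Equiv.swap (e1 o) k * e1, ?_, ?_⟩
    · rw [Equiv.Perm.mul_apply, h0]
      refine Equiv.swap_apply_of_ne_of_ne ?_ hik
      rw [← h0]; exact fun h => hzo (e1.injective h)
    · rw [Equiv.Perm.mul_apply, Equiv.swap_apply_left]
  refine ⟨[fun x j => x (e.symm j), fun x j => if j < o then x j * x o else x j,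
    fun x j => x (e j)], ?_, ?_⟩
  · intro σ hσ
    simp only [List.mem_cons, List.not_mem_nil, or_false] at hσ
    rcases hσ with rfl | rfl | rfl
    · exact Or.inl ⟨e.symm, rfl⟩
    · exact Or.inr ⟨o, by simp [o], rfl⟩
    · exact Or.inl ⟨e, rfl⟩
  · funext x j
    have hlt : ∀ j : Fin n, j < o ↔ j = z := by
      intro j; rw [Fin.lt_def, Fin.ext_iff]; simp [o, z]
    have hj : e.symm j = z ↔ j = i := by rw [Equiv.symm_apply_eq, he0]
    simp only [List.foldr_cons, List.foldr_nil, Function.comp_apply, id, hlt, hj, mrE,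
      Equiv.apply_symm_apply, he1]
    by_cases h : j = i
    · subst h; simp
    · simp [h]

lemma MrGen.list {n : ℕ} {s : Finset (Fin n)} {σ : (Fin n → ℝ) → (Fin n → ℝ)}
    (h : MrGen s σ) : ∃ L : List ((Fin n → ℝ) → (Fin n → ℝ)),
      (∀ σ ∈ L, IsElemMonomialChange σ) ∧ L.foldr (· ∘ ·) _root_.id = σ := by
  induction h with
  | id => exact ⟨[], by simp, rfl⟩
  | step i k hik hi hk σ _ ih =>
    obtain ⟨L, hL, rfl⟩ := ih
    obtain ⟨M, hM, hM'⟩ := mrE_list i k hik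
    refine ⟨M ++ L, ?_, by rw [mr_foldr_append, hM']⟩
    intro σ hσ
    rcases List.mem_append.1 hσ with h | h
    · exact hM _ h
    · exact hL _ h

/-- the move `x_a ↦ x_a * x^M` -/
def mrT {n : ℕ} (a : Fin n) (M : Multiset (Fin n)) (x : Fin n → ℝ) : Fin n → ℝ :=
  Function.update x a (x a * (M.map x).prod)

lemma mrT_gen {n : ℕ} {s : Finset (Fin n)} {a : Fin n} (ha : a ∉ s) (M : Multiset (Fin n))
    (hM : ∀ k ∈ M, k ∈ s) : MrGen (insert a s) (mrT a M) := by
  induction M using Multiset.induction_on with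
  | empty =>
    have : mrT a (0 : Multiset (Fin n)) = id := by
      funext x; simp [mrT]
    rw [this]; exact .id
  | cons k M ih =>
    have hk : k ∈ s := hM k (by simp)
    have hka : k ≠ a := fun h => ha (h ▸ hk)
    have : mrT a (k ::ₘ M) = mrE a k ∘ mrT a M := by
      funext x
      simp only [mrT, mrE, Function.comp_apply, Function.update_self, Function.update_idem,
        Function.update_of_ne hka, Multiset.map_cons, Multiset.prod_cons]
      congr 1; ring
    rw [this]
    exact .step a k hka.symm (by simp) (by simp [hk]) _
      (ih fun j hj => hM j (Multiset.mem_cons_of_mem hj))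

/-- projection to coordinates in `s` -/
noncomputable def mrPi {n : ℕ} (s : Finset (Fin n)) : (Fin n → ℝ) →L[ℝ] (Fin n → ℝ) :=
  ContinuousLinearMap.pi fun k => if k ∈ s then ContinuousLinearMap.proj k else 0

lemma mrPi_apply {n : ℕ} (s : Finset (Fin n)) (x : Fin n → ℝ) (k : Fin n) :
    mrPi s x k = if k ∈ s then x k else 0 := by
  simp only [mrPi, ContinuousLinearMap.coe_pi']
  split_ifs <;> simp

lemma mr_analytic_clm {n : ℕ} {f : (Fin n → ℝ) → ℝ} (hf : AnalyticAt ℝ f 0)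
    (l : (Fin n → ℝ) →L[ℝ] (Fin n → ℝ)) : AnalyticAt ℝ (fun x => f (l x)) 0 := by
  have : AnalyticAt ℝ f (l 0) := by simpa using hf
  exact this.comp (l.analyticAt 0)

lemma MrGen.analytic_comp {n : ℕ} {s : Finset (Fin n)} {σ : (Fin n → ℝ) → (Fin n → ℝ)}
    (h : MrGen s σ) {f : (Fin n → ℝ) → ℝ} (hf : AnalyticAt ℝ f 0) :
    AnalyticAt ℝ (fun x => f (σ x)) 0 := by
  have : AnalyticAt ℝ f (σ 0) := by rwa [h.zero]
  exact this.comp (h.analytic 0)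

lemma MrGen.tendsto {n : ℕ} {s : Finset (Fin n)} {σ : (Fin n → ℝ) → (Fin n → ℝ)}
    (h : MrGen s σ) : Tendsto σ (𝓝 0) (𝓝 0) := by
  have := (h.analytic 0).continuousAt.tendsto
  rwa [h.zero] at this

lemma mr_main {n : ℕ} {ι : Type*} (s : Finset (Fin n)) :
    ∀ h : ι → (Fin n → ℝ) → ℝ, (∀ i, AnalyticAt ℝ (h i) 0) →
      (∃ i, ¬ ∀ᶠ x in 𝓝 0, h i x = 0) → (∀ i x, h i (mrPi s x) = h i x) →
      ∃ (σ : (Fin n → ℝ) → (Fin n → ℝ)) (M : Multiset (Fin n)) (g : ι → (Fin n → ℝ) → ℝ),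
        MrGen s σ ∧ (∀ k ∈ M, k ∈ s) ∧ (∀ i, AnalyticAt ℝ (g i) 0) ∧
        (∀ i, ∀ᶠ x in 𝓝 0, h i (σ x) = (M.map x).prod * g i x) ∧ ∃ j, g j 0 ≠ 0 := by
  induction s using Finset.induction_on with
  | empty =>
    intro h hh hnz hpi
    refine ⟨id, 0, h, .id, by simp, hh, fun i => by simp, ?_⟩
    by_contra! hc
    obtain ⟨i, hi⟩ := hnz
    refine hi (Eventually.of_forall fun x => ?_)
    have : mrPi ∅ x = 0 := by ext k; simp [mrPi_apply]
    rw [← hpi, this, hc]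
  | insert a s ha ih =>
    intro h hh hnz hpi
    obtain ⟨d, g, hg, hhg, hgl, j, hj⟩ := mr_factor a h hh hnz (mrPi (insert a s))
      (fun x => by ext b; simp only [mrPi_apply]; split_ifs <;> rfl)
      (fun x => by simp [mrPi_apply]) hpi
    let k : ι → (Fin n → ℝ) → ℝ := fun i x => g i (mrPi s x)
    have hk : ∀ i, AnalyticAt ℝ (k i) 0 := fun i => mr_analytic_clm (hg i) _
    have hgk : ∀ i x, g i (Function.update x a 0) = k i x := by
      intro i x
      rw [← hgl]
      simp only [k]
      congr 1
      ext b
      simp only [mrPi_apply, Finset.mem_insert]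
      by_cases hb : b = a
      · subst hb; simp [ha]
      · simp [hb]
    have hkk : ∀ i x, k i (mrPi s x) = k i x := by
      intro i x
      simp only [k]
      congr 1
      ext b
      simp only [mrPi_apply]
      split_ifs <;> rfl
    have hknz : ∃ i, ¬ ∀ᶠ x in 𝓝 0, k i x = 0 := by
      simp only [hgk] at hj
      exact ⟨j, hj⟩
    obtain ⟨σ, M, q, hσ, hM, hq, hkq, j', hjq⟩ := ih k hk hknz hkk
    choose R hR hRe using fun i => mr_hadamard a (fun x => g i (σ x)) (hσ.analytic_comp (hg i))
    have hτ : MrGen (insert a s) (mrT a M) := mrT_gen ha M hM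
    have hσ' : MrGen (insert a s) σ := hσ.mono (Finset.subset_insert a s)
    have hMτ : ∀ x, (M.map (mrT a M x)).prod = (M.map x).prod := by
      intro x
      congr 1
      refine Multiset.map_congr rfl fun b hb => ?_
      have : b ≠ a := fun h => ha (h ▸ hM b hb)
      simp [mrT, this]
    refine ⟨σ ∘ mrT a M, Multiset.replicate d a + (d + 1) • M,
      fun i x => q i (mrT a M x) + x a * R i (mrT a M x), hσ'.comp hτ, ?_, ?_, ?_, j', ?_⟩
    · intro b hb
      rcases Multiset.mem_add.1 hb with hb | hb
      · rw [Multiset.eq_of_mem_replicate hb]; simp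
      · exact Finset.mem_insert_of_mem (hM b (Multiset.mem_of_mem_nsmul hb))
    · intro i
      have hp : AnalyticAt ℝ (fun x : Fin n → ℝ => x a) 0 :=
        (ContinuousLinearMap.proj a : (Fin n → ℝ) →L[ℝ] ℝ).analyticAt _
      exact (hτ.analytic_comp (hq i)).fun_add (hp.fun_mul (hτ.analytic_comp (hR i)))
    · intro i
      filter_upwards [(hσ'.comp hτ).tendsto.eventually (hhg i), hτ.tendsto.eventually (hRe i),
        hτ.tendsto.eventually (hkq i)] with x h1 h2 h3
      rw [h1]
      simp only [Function.comp_apply] at h1 ⊢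
      rw [h2, hσ.update ha, hgk, h3, hMτ, hσ.apply_notMem ha]
      simp only [mrT, Function.update_self, Multiset.map_add, Multiset.map_replicate,
        Multiset.prod_add, Multiset.prod_replicate, Multiset.map_nsmul, Multiset.prod_nsmul]
      ring
    · simpa [hτ.zero] using hjq

/-- Corollary 5 of the paper: monomial regularization. Given real
analytic functions `h₀, …, h_r` on an open neighborhood `U` of `0 ∈ ℝⁿ`, not all with
identically zero germ at the origin, there is a finite composite `σ̄` of elementary
monomial coordinate changes, an exponent vector `d`, a neighborhood `V` of `0` with
`σ̄(V) ⊆ U`, and real analytic functions `h̃₀, …, h̃_r` on `V` with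
`hᵢ(σ̄ z) = z₁^{d₁} ⋯ zₙ^{dₙ} · h̃ᵢ(z)` on `V` and `h̃_j(0) ≠ 0` for some `j`. -/
theorem monomial_regularization
    (n r : ℕ) (U : Set (Fin n → ℝ)) (hU : IsOpen U) (h0 : (0 : Fin n → ℝ) ∈ U)
    (h : Fin (r + 1) → (Fin n → ℝ) → ℝ)
    (han : ∀ i, AnalyticOnNhd ℝ (h i) U)
    (hnz : ∃ i, ¬ (∀ᶠ x in nhds (0 : Fin n → ℝ), h i x = 0)) :
    ∃ (L : List ((Fin n → ℝ) → (Fin n → ℝ))) (d : Fin n → ℕ)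
      (V : Set (Fin n → ℝ)) (ht : Fin (r + 1) → (Fin n → ℝ) → ℝ),
      (∀ σ ∈ L, IsElemMonomialChange σ) ∧
      IsOpen V ∧ (0 : Fin n → ℝ) ∈ V ∧
      (L.foldr (· ∘ ·) id) '' V ⊆ U ∧
      (∀ i, AnalyticOnNhd ℝ (ht i) V) ∧
      (∀ z ∈ V, ∀ i, h i (L.foldr (· ∘ ·) id z) = (∏ k, z k ^ d k) * ht i z) ∧
      (∃ j, ht j 0 ≠ 0) := by
  classical
  obtain ⟨σ, M, g, hσ, -, hg, he, hj⟩ := mr_main Finset.univ h (fun i => han i 0 h0) hnz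
    (fun i x => by congr 1; ext b; simp [mrPi_apply])
  obtain ⟨L, hL, hLσ⟩ := hσ.list
  have hUe : ∀ᶠ x in 𝓝 (0 : Fin n → ℝ), σ x ∈ U :=
    hσ.tendsto.eventually (hU.mem_nhds h0)
  have hall : ∀ᶠ x in 𝓝 (0 : Fin n → ℝ), σ x ∈ U ∧ (∀ i, AnalyticAt ℝ (g i) x) ∧
      ∀ i, h i (σ x) = (M.map x).prod * g i x :=
    hUe.and ((eventually_all.2 fun i => (hg i).eventually_analyticAt).and (eventually_all.2 he))
  obtain ⟨V, hV, hVo, hV0⟩ := eventually_nhds_iff.1 hall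
  refine ⟨L, fun k => M.count k, V, g, hL, hVo, hV0, ?_, ?_, ?_, hj⟩
  · rw [hLσ]
    rintro _ ⟨x, hx, rfl⟩
    exact (hV x hx).1
  · exact fun i x hx => (hV x hx).2.1 i
  · intro z hz i
    rw [hLσ, (hV z hz).2.2 i, Finset.prod_multiset_map_count]
    congr 1
    refine Finset.prod_subset (Finset.subset_univ _) fun k _ hk => ?_
    rw [Multiset.count_eq_zero_of_notMem (by simpa using hk), pow_zero]
end
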